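/- arXiv:1801.07544 — 4 statements merged into one kernel-verified Lean document; each statement's English description precedes it below -/
import Mathlib

section
/- Let n, m, p be positive integers, A ∈ ℤ^{p×(nm)}, b ∈ ℤ^p, u_{ij} ≥ 0, and let X = {z ∈ {0,1}^{n×m} : A z ≤ b} with T_i(z) = Σ_{j=1}^m u_{ij} z_{ij}. Let w_1 > w_2 > … > w_n > 0 and define y*_{ik} = w'_k if i ≥ n+1−k and y*_{ik} = 0 otherwise (so that Σ_{k=1}^n y*_{ik} = w_{n+1−i} for each i). Suppose z* ∈ X maximizes the linear objective Σ_{i=1}^n (Σ_{k=1}^n y*_{ik}) T_i(z) = Σ_{i=1}^n w_{n+1−i} T_i(z) over all z ∈ X, and suppose T_1(z*) ≥ T_2(z*) ≥ … ≥ T_n(z*). Then z* maximizes the generalized Gini index G_w(T_1(z),…,T_n(z)) over all z ∈ X. -/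
/-- The vector `v` rearranged in nondecreasing order. -/
noncomputable def sortedVec {n : ℕ} (v : Fin n → ℝ) : Fin n → ℝ := v ∘ Tuple.sort v

/-- Ordered weighted average: `OWA_w(v) = ∑ₖ w_k v↑_k`. -/
noncomputable def OWA {n : ℕ} (w v : Fin n → ℝ) : ℝ := ∑ k, w k * sortedVec v k

/-- `Lorenz v k` is the k-th Lorenz component, the sum of the k smallest components of v. -/
noncomputable def Lorenz {n : ℕ} (v : Fin n → ℝ) (k : ℕ) : ℝ :=
  ∑ i : Fin n, if (i : ℕ) < k then sortedVec v i else 0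

/-- `wprime w k = w_k - w_{k+1}` with the convention `w_{n+1} = 0` (0-indexed). -/
noncomputable def wprime {n : ℕ} (w : Fin n → ℝ) (k : Fin n) : ℝ :=
  w k - (if h : (k : ℕ) + 1 < n then w ⟨(k : ℕ) + 1, h⟩ else 0)

/-- Feasible set `X = {z ∈ {0,1}^{n×m} : A z ≤ b}`. -/
def Feasible {n m p : ℕ} (A : Matrix (Fin p) (Fin n × Fin m) ℤ) (b : Fin p → ℤ)
    (z : Fin n × Fin m → ℝ) : Prop :=
  (∀ ij, z ij = 0 ∨ z ij = 1) ∧ ∀ q, ∑ ij, (A q ij : ℝ) * z ij ≤ (b q : ℝ)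

/-- `Util u z i = T_i(z) = ∑ⱼ u_{ij} z_{ij}`. -/
def Util {n m : ℕ} (u : Fin n → Fin m → ℝ) (z : Fin n × Fin m → ℝ) (i : Fin n) : ℝ :=
  ∑ j, u i j * z (i, j)

theorem sum_wprime {n : ℕ} (w : Fin n → ℝ) (i : Fin n) :
    (∑ k : Fin n, if n ≤ (i : ℕ) + (k : ℕ) + 1 then wprime w k else 0) = w (Fin.rev i) := by
  set W : ℕ → ℝ := fun k => if h : k < n then w ⟨k, h⟩ else 0 with hW
  have h1 : ∀ k : Fin n, (if n ≤ (i : ℕ) + (k : ℕ) + 1 then wprime w k else 0)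
      = (fun k : ℕ => if n ≤ (i : ℕ) + k + 1 then W k - W (k + 1) else 0) (k : ℕ) := by
    intro k
    simp [wprime, hW]
  rw [Finset.sum_congr rfl (fun k _ => h1 k), 
    Fin.sum_univ_eq_sum_range (fun k : ℕ => if n ≤ (i : ℕ) + k + 1 then W k - W (k + 1) else 0) n,
    ← Finset.sum_filter]
  have h2 : (Finset.range n).filter (fun k => n ≤ (i : ℕ) + k + 1)
      = Finset.Ico (n - ((i : ℕ) + 1)) n := by
    ext k
    simp only [Finset.mem_filter, Finset.mem_range, Finset.mem_Ico]
    omega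
  rw [h2]
  have h3 := Finset.sum_Ico_sub W (show n - ((i : ℕ) + 1) ≤ n by omega)
  have h4 : W n = 0 := by simp [hW]
  have h5 : W (n - ((i : ℕ) + 1)) = w (Fin.rev i) := by
    have : n - ((i : ℕ) + 1) < n := by have := i.2; omega
    simp only [hW, this, dif_pos]
    rfl
  rw [← h5]
  rw [h4, Finset.sum_sub_distrib] at h3
  rw [Finset.sum_sub_distrib]
  linarith

theorem OWA_le_perm {n : ℕ} (w v : Fin n → ℝ) (hw : Antitone w) (σ : Equiv.Perm (Fin n)) :
    OWA w v ≤ ∑ k, w k * v (σ k) := by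
  have hm : Monotone (sortedVec v) := Tuple.monotone_sort v
  have h := (hw.antivary hm).sum_mul_le_sum_mul_comp_perm (σ := σ.trans (Tuple.sort v).symm)
  simpa [OWA, sortedVec] using h

/-- Theorem 1, optimality condition: if `z*` maximizes the linear
objective `∑ᵢ (∑ₖ y*_{ik}) T_i(z)` over `X`, where `y*_{ik} = w'_k` for `i ≥ n+1-k`
(1-indexed) and `0` otherwise, and `T_1(z*) ≥ … ≥ T_n(z*)`, then `z*` maximizes the
generalized Gini index `G_w(T_1(z),…,T_n(z))` over `X`. -/
theorem stmt0 {n m p : ℕ} (hn : 0 < n) (hm : 0 < m) (hp : 0 < p)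
    (A : Matrix (Fin p) (Fin n × Fin m) ℤ) (b : Fin p → ℤ)
    (u : Fin n → Fin m → ℝ) (hu : ∀ i j, 0 ≤ u i j)
    (w : Fin n → ℝ) (hw : StrictAnti w) (hwpos : ∀ k, 0 < w k)
    (ystar : Fin n → Fin n → ℝ)
    (hy : ∀ i k : Fin n, ystar i k = if n ≤ (i : ℕ) + (k : ℕ) + 1 then wprime w k else 0)
    (zstar : Fin n × Fin m → ℝ) (hzstar : Feasible A b zstar)
    (hmax : ∀ z, Feasible A b z →
      ∑ i, (∑ k, ystar i k) * Util u z i ≤ ∑ i, (∑ k, ystar i k) * Util u zstar i)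
    (hsorted : ∀ i j : Fin n, i ≤ j → Util u zstar j ≤ Util u zstar i) :
    ∀ z, Feasible A b z → OWA w (Util u z) ≤ OWA w (Util u zstar) := by
  intro z hz
  have key : ∀ v : Fin n → ℝ,
      ∑ i, (∑ k, ystar i k) * v i = ∑ k, w k * v (Fin.revPerm k) := by
    intro v
    rw [← Equiv.sum_comp Fin.revPerm]
    refine Finset.sum_congr rfl fun i _ => ?_
    simp only [hy, sum_wprime, Fin.revPerm_apply, Fin.rev_rev]
  have h1 := OWA_le_perm w (Util u z) hw.antitone Fin.revPerm
  have h2 : Util u zstar ∘ Fin.revPerm = Util u zstar ∘ Tuple.sort (Util u zstar) := by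
    rw [Tuple.comp_sort_eq_comp_iff_monotone]
    intro i j hij
    exact hsorted _ _ (Fin.rev_le_rev.mpr hij)
  have h3 : OWA w (Util u zstar) = ∑ k, w k * Util u zstar (Fin.revPerm k) := by
    unfold OWA sortedVec
    rw [← h2]
    rfl
  have h4 := hmax z hz
  rw [key, key] at h4
  rw [h3]
  exact h1.trans h4
end

section
/- Let n, m, p be positive integers, A ∈ ℤ^{p×(nm)}, b ∈ ℤ^p, u_{ij} ≥ 0, and let X = {z ∈ {0,1}^{n×m} : A z ≤ b} with T_i(z) = Σ_{j=1}^m u_{ij} z_{ij}. Let w_1 > w_2 > … > w_n > 0 and w'_max = max_{k∈[n]} w'_k. Suppose z̄ ∈ X maximizes the total weight Σ_{i=1}^n T_i(z) over X, write T̄_i = T_i(z̄), assume (after relabeling) T̄_1 ≥ T̄_2 ≥ … ≥ T̄_n and Σ_{i=1}^n T̄_i > 0. Then G_w(T̄_1,…,T̄_n) ≥ max( 2 w'_n / ((n+1) w'_max), n T̄_n / (Σ_{i=1}^n T̄_i) ) · sup_{z ∈ X} G_w(T_1(z),…,T_n(z)). -/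
theorem sum_sortedVec {n : ℕ} (v : Fin n → ℝ) : ∑ i, sortedVec v i = ∑ i, v i :=
  Equiv.sum_comp (Tuple.sort v) v

theorem owa_upper {n : ℕ} (w v : Fin n → ℝ) (hw : Antitone w) :
    (n : ℝ) * OWA w v ≤ (∑ k, w k) * ∑ i, v i := by
  have hmono : Monotone (sortedVec v) := Tuple.monotone_sort v
  have h : Antivary w (sortedVec v) := hw.antivary hmono
  have h2 := h.card_mul_sum_le_sum_mul_sum
  rw [sum_sortedVec] at h2
  simpa [OWA] using h2

theorem owa_lower_w {n : ℕ} (w v : Fin n → ℝ) (c : ℝ) (hc : ∀ k, c ≤ w k) (hv : ∀ i, 0 ≤ v i) :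
    c * ∑ i, v i ≤ OWA w v := by
  rw [← sum_sortedVec v, Finset.mul_sum]
  exact Finset.sum_le_sum fun k _ => mul_le_mul_of_nonneg_right (hc k) (hv _)

theorem owa_lower_v {n : ℕ} (w v : Fin n → ℝ) (c : ℝ) (hc : ∀ i, c ≤ v i) (hw : ∀ k, 0 ≤ w k) :
    (∑ k, w k) * c ≤ OWA w v := by
  rw [Finset.sum_mul]
  exact Finset.sum_le_sum fun k _ => mul_le_mul_of_nonneg_left (hc _) (hw k)

theorem w_le_mul {n : ℕ} (w : Fin n → ℝ) (M : ℝ) (hM : ∀ k, wprime w k ≤ M) (d : ℕ) :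
    ∀ k : Fin n, (k : ℕ) + d + 1 = n → w k ≤ ((d : ℝ) + 1) * M := by
  induction d with
  | zero =>
    intro k hk
    have h := hM k
    unfold wprime at h
    rw [dif_neg (by omega)] at h
    simpa using h
  | succ d ih =>
    intro k hk
    have h := hM k
    unfold wprime at h
    rw [dif_pos (by omega)] at h
    have h2 := ih ⟨(k : ℕ) + 1, by omega⟩ (by simp only; omega)
    push_cast
    linarith

theorem sum_w_le {n : ℕ} (w : Fin n → ℝ) (M : ℝ) (hM : ∀ k, wprime w k ≤ M) :
    2 * ∑ k, w k ≤ (n : ℝ) * ((n : ℝ) + 1) * M := by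
  have h1 : ∑ k, w k ≤ ∑ k : Fin n, ((n : ℝ) - (k : ℕ)) * M := by
    refine Finset.sum_le_sum fun k _ => ?_
    have h := w_le_mul w M hM (n - 1 - k) k (by omega)
    have e : ((n - 1 - (k : ℕ) : ℕ) : ℝ) + 1 = (n : ℝ) - (k : ℕ) := by
      have : (n - 1 - (k : ℕ)) + 1 + (k : ℕ) = n := by omega
      have := congrArg (Nat.cast (R := ℝ)) this
      push_cast at this ⊢
      linarith
    rwa [e] at h
  have h2 : ∀ N : ℕ, 2 * ∑ k ∈ Finset.range N, ((n : ℝ) - (k : ℕ)) = N * (2 * n - N + 1) := by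
    intro N
    induction N with
    | zero => simp
    | succ N ih => rw [Finset.sum_range_succ, mul_add, ih]; push_cast; ring
  rw [← Finset.sum_mul, Fin.sum_univ_eq_sum_range (fun k => (n : ℝ) - (k : ℕ)) n] at h1
  have h3 := h2 n
  calc 2 * ∑ k, w k ≤ (2 * ∑ k ∈ Finset.range n, ((n : ℝ) - (k : ℕ))) * M := by linarith
    _ = _ := by rw [h3]; ring

theorem util_nonneg {n m p : ℕ} {A : Matrix (Fin p) (Fin n × Fin m) ℤ} {b : Fin p → ℤ}
    {u : Fin n → Fin m → ℝ} (hu : ∀ i j, 0 ≤ u i j) {z : Fin n × Fin m → ℝ}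
    (hz : Feasible A b z) (i : Fin n) : 0 ≤ Util u z i := by
  refine Finset.sum_nonneg fun j _ => mul_nonneg (hu i j) ?_
  rcases hz.1 (i, j) with h | h <;> simp [h]

/-- Theorem 2, approximation ratio: if `z̄` maximizes the total weight
`∑ᵢ T_i(z)` over `X`, with `T̄_1 ≥ … ≥ T̄_n` and `∑ᵢ T̄_i > 0`, then the GGI value of `z̄`
is at least `max(2w'_n/((n+1)w'_max), n T̄_n / ∑ᵢ T̄_i)` times the optimal GGI value. -/
theorem stmt1 {n m p : ℕ} (hn : 0 < n) (hm : 0 < m) (hp : 0 < p)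
    (A : Matrix (Fin p) (Fin n × Fin m) ℤ) (b : Fin p → ℤ)
    (u : Fin n → Fin m → ℝ) (hu : ∀ i j, 0 ≤ u i j)
    (w : Fin n → ℝ) (hw : StrictAnti w) (hwpos : ∀ k, 0 < w k)
    (zbar : Fin n × Fin m → ℝ) (hzbar : Feasible A b zbar)
    (hmaxwt : ∀ z, Feasible A b z → ∑ i, Util u z i ≤ ∑ i, Util u zbar i)
    (hsorted : ∀ i j : Fin n, i ≤ j → Util u zbar j ≤ Util u zbar i)
    (hpos : 0 < ∑ i, Util u zbar i) :
    ∀ z, Feasible A b z →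
      max (2 * wprime w ⟨n - 1, by omega⟩ /
            (((n : ℝ) + 1) *
              Finset.univ.sup' (Finset.univ_nonempty_iff.mpr ⟨⟨0, hn⟩⟩) (wprime w)))
          ((n : ℝ) * Util u zbar ⟨n - 1, by omega⟩ / (∑ i, Util u zbar i)) *
        OWA w (Util u z) ≤ OWA w (Util u zbar) := by
  intro z hz
  have hnR : (0 : ℝ) < n := by exact_mod_cast hn
  set M := Finset.univ.sup' (Finset.univ_nonempty_iff.mpr ⟨⟨0, hn⟩⟩) (wprime w) with hMdef
  have hM : ∀ k, wprime w k ≤ M := fun k => Finset.le_sup' (wprime w) (Finset.mem_univ k)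
  have hlast : wprime w ⟨n - 1, by omega⟩ = w ⟨n - 1, by omega⟩ := by
    unfold wprime
    rw [dif_neg (by simp only; omega), sub_zero]
  have hMpos : 0 < M := by
    have := hM ⟨n - 1, by omega⟩
    rw [hlast] at this
    exact lt_of_lt_of_le (hwpos _) this
  have hz0 := util_nonneg hu hz
  have hb0 := util_nonneg hu hzbar
  have hU := owa_upper w (Util u z) hw.antitone
  have hS := hmaxwt z hz
  have hW0 : 0 ≤ ∑ k, w k := Finset.sum_nonneg fun k _ => (hwpos k).le
  have hO0 : 0 ≤ OWA w (Util u z) :=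
    Finset.sum_nonneg fun k _ => mul_nonneg (hwpos k).le (hz0 _)
  have hU' : (n : ℝ) * OWA w (Util u z) ≤ (∑ k, w k) * ∑ i, Util u zbar i :=
    hU.trans (mul_le_mul_of_nonneg_left hS hW0)
  rw [max_mul_of_nonneg _ _ hO0]
  refine max_le ?_ ?_
  · rw [hlast]
    set c := w ⟨n - 1, by omega⟩ with hc
    have hcpos : 0 < c := hwpos _
    have hlow := owa_lower_w w (Util u zbar) c
      (fun k => hw.antitone (Fin.mk_le_mk.mpr (by omega) : k ≤ ⟨n - 1, by omega⟩)) hb0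
    have hsum := sum_w_le w M hM
    refine le_trans ?_ hlow
    rw [div_mul_eq_mul_div, div_le_iff₀ (by positivity)]
    have h1 : (n : ℝ) * (2 * OWA w (Util u z)) ≤
        n * (((n : ℝ) + 1) * M * ∑ i, Util u zbar i) := by
      have := mul_le_mul_of_nonneg_right hsum hpos.le
      linarith
    have h2 := le_of_mul_le_mul_left h1 hnR
    have h3 := mul_le_mul_of_nonneg_left h2 hcpos.le
    linarith
  · have hlow := owa_lower_v w (Util u zbar) (Util u zbar ⟨n - 1, by omega⟩)
      (fun i => hsorted _ _ (Fin.mk_le_mk.mpr (by omega) : i ≤ ⟨n - 1, by omega⟩))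
      (fun k => (hwpos k).le)
    refine le_trans ?_ hlow
    rw [div_mul_eq_mul_div, div_le_iff₀ hpos]
    have h3 := mul_le_mul_of_nonneg_left hU' (hb0 ⟨n - 1, by omega⟩)
    linarith
end

section
/- If w_1 > w_2 > … > w_n > 0, then the generalized Gini index G_w is strictly increasing with respect to Pareto dominance: for all v, v' ∈ ℝ^n, if v_i ≥ v'_i for every i ∈ {1,…,n} and v_j > v'_j for some j, then G_w(v) > G_w(v'). -/
/-- for strictly decreasing positive weights, the generalized Gini index
`G_w = OWA_w` is strictly increasing with respect to Pareto dominance. -/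
theorem stmt3 {n : ℕ} (w : Fin n → ℝ) (hw : StrictAnti w) (hwpos : ∀ k, 0 < w k)
    (v v' : Fin n → ℝ) (hdom : ∀ i, v' i ≤ v i) (j : Fin n) (hj : v' j < v j) :
    OWA w v' < OWA w v := by
  have hanti : Antivary w (v' ∘ Tuple.sort v') :=
    hw.antitone.antivary (Tuple.monotone_sort v')
  have h1 := hanti.sum_mul_le_sum_mul_comp_perm
    (σ := (Tuple.sort v).trans (Tuple.sort v').symm)
  have h2 : ∑ k, w k * v' (Tuple.sort v k) < ∑ k, w k * v (Tuple.sort v k) := by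
    refine Finset.sum_lt_sum
      (fun k _ => mul_le_mul_of_nonneg_left (hdom _) (hwpos k).le)
      ⟨(Tuple.sort v).symm j, Finset.mem_univ _, ?_⟩
    have h3 := mul_lt_mul_of_pos_left hj (hwpos ((Tuple.sort v).symm j))
    simpa only [Equiv.apply_symm_apply] using h3
  simp only [Function.comp_apply, Equiv.trans_apply, Equiv.apply_symm_apply] at h1
  exact lt_of_le_of_lt h1 h2
end

section
/- For any v ∈ ℝ^n and any integer k with 1 ≤ k ≤ n, the k-th Lorenz component equals the optimal value of the dual linear program (DL_k): L_k(v) = max { k r − Σ_{i=1}^n d_i : r ∈ ℝ, d ∈ ℝ^n, d_i ≥ 0 and r − d_i ≤ v_i for all i }, and the maximum is attained at r = v^↑_k and d_i = max(v^↑_k − v_i, 0). -/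
theorem card_mul_aux {n : ℕ} (k : ℕ) (hkn : k ≤ n) (r : ℝ) :
    (k : ℝ) * r = ∑ i : Fin n, if (i : ℕ) < k then r else 0 := by
  rw [Fin.sum_univ_eq_sum_range (fun i => if i < k then r else 0) n, ← Finset.sum_filter]
  have : (Finset.range n).filter (fun i => i < k) = Finset.range k := by
    ext i
    simp only [Finset.mem_filter, Finset.mem_range]
    omega
  rw [this]
  simp

theorem lorenz_eq_aux {n : ℕ} (v : Fin n → ℝ) (k : ℕ) (hkn : k ≤ n) (m : Fin n)
    (hmk : (m : ℕ) + 1 = k) :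
    Lorenz v k = (k : ℝ) * sortedVec v m - ∑ i, max (sortedVec v m - v i) 0 := by
  have hm : Monotone (sortedVec v) := Tuple.monotone_sort v
  rw [← Equiv.sum_comp (Tuple.sort v) (fun i => max (sortedVec v m - v i) 0),
    card_mul_aux k hkn (sortedVec v m), ← Finset.sum_sub_distrib, Lorenz]
  refine Finset.sum_congr rfl fun i _ => ?_
  change _ = _ - max (sortedVec v m - sortedVec v i) 0
  split_ifs with h
  · have : sortedVec v i ≤ sortedVec v m := hm (Fin.le_def.2 (by omega))
    rw [max_eq_left (by linarith)]
    ring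
  · have : sortedVec v m ≤ sortedVec v i := hm (Fin.le_def.2 (by omega))
    rw [max_eq_right (by linarith)]
    ring

/-- the k-th Lorenz component is the attained maximum of the dual LP
`max { k r - ∑ᵢ dᵢ : dᵢ ≥ 0, r - dᵢ ≤ vᵢ }`, attained at `r = v↑_k`,
`dᵢ = max(v↑_k - vᵢ, 0)`. -/
theorem stmt6 {n : ℕ} (v : Fin n → ℝ) (k : ℕ) (hk1 : 1 ≤ k) (hkn : k ≤ n) :
    IsGreatest {s : ℝ | ∃ (r : ℝ) (d : Fin n → ℝ),
        (∀ i, 0 ≤ d i) ∧ (∀ i, r - d i ≤ v i) ∧ s = (k : ℝ) * r - ∑ i, d i}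
      (Lorenz v k) ∧
    Lorenz v k = (k : ℝ) * sortedVec v ⟨k - 1, by omega⟩ -
      ∑ i, max (sortedVec v ⟨k - 1, by omega⟩ - v i) 0 := by
  refine ⟨⟨⟨sortedVec v ⟨k - 1, by omega⟩,
    fun i => max (sortedVec v ⟨k - 1, by omega⟩ - v i) 0, fun i => le_max_right _ _,
    fun i => ?_, lorenz_eq_aux v k hkn _ (Nat.sub_add_cancel hk1)⟩, ?_⟩, lorenz_eq_aux v k hkn _ (Nat.sub_add_cancel hk1)⟩
  · have := le_max_left (sortedVec v ⟨k - 1, by omega⟩ - v i) 0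
    linarith
  · rintro s ⟨r, d, hd, hv, rfl⟩
    rw [← Equiv.sum_comp (Tuple.sort v) d, card_mul_aux k hkn r,
      ← Finset.sum_sub_distrib, Lorenz]
    refine Finset.sum_le_sum fun i _ => ?_
    have h1 := hd (Tuple.sort v i)
    have h2 : r - d (Tuple.sort v i) ≤ sortedVec v i := hv (Tuple.sort v i)
    split_ifs <;> linarith
end
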